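/- In the generalized restricted game RL^K(X,Y;v), for every probability distribution p = (p_S) over the size-K subsets S of {1,…,C} and every family β = (β_{S,c}) with β_{S,c} > 0 for c ∈ S and Σ_{c∈S} β_{S,c} = 1 for each size-K subset S, the min-max value of player X satisfies inf_{F_Y ∈ 𝔽^K(Y)} sup_{F_X ∈ 𝔽(X)} π_X(F_X,F_Y) ≤ 1 − T₁(p)²/(4·T₂(p,β)) if T₁(p) ≤ 2·T₂(p,β), and ≤ 1 − T₁(p) + T₂(p,β) if T₁(p) > 2·T₂(p,β), where T₁(p) := Σ_c v_c·Σ_{S : c∈S} p_S and T₂(p,β) := (X/(2Y))·max_c { v_c·Σ_{S : c∈S} p_S/β_{S,c} }. -/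

import Mathlib

open MeasureTheory Finset

noncomputable section

/-- Admissible strategies for a player with budget `B`: Borel probability measures on `ℝ^C`
supported (i.e. concentrated, with full measure) on the nonnegative orthant, whose expected
total allocation is at most `B`. -/
def Strat (C : ℕ) (B : ℝ) : Set (Measure (Fin C → ℝ)) :=
  {μ | IsProbabilityMeasure μ ∧ μ {x | ∀ c, 0 ≤ x c} = 1 ∧
    ∫⁻ x, ENNReal.ofReal (∑ c, x c) ∂μ ≤ ENNReal.ofReal B}

/-- Expected payoff to player `X`: `E[Σ_c v_c · 1{x_c ≥ y_c}]`. -/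
def payoff (C : ℕ) (v : Fin C → ℝ) (F G : Measure (Fin C → ℝ)) : ℝ :=
  ∫ x, (∫ y, (∑ c, if y c ≤ x c then v c else 0) ∂G) ∂F

/-- Nonnegative allocations with at most `K` positive coordinates. -/
def RK (C K : ℕ) : Set (Fin C → ℝ) :=
  {y | (∀ c, 0 ≤ y c) ∧ {c : Fin C | 0 < y c}.ncard ≤ K}

/-- Restricted strategies: admissible strategies concentrated on `R^K`. -/
def StratK (C K : ℕ) (B : ℝ) : Set (Measure (Fin C → ℝ)) :=
  {μ | μ ∈ Strat C B ∧ μ (RK C K) = 1}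

/-!
Player `Y` draws a set `S` with probability `p S` and then, with `U` uniform on `[0, 1]`, allocates
`(2 * Y / a ^ 2) * β S c * (a - U)⁺` to each `c ∈ S` and nothing elsewhere. This costs `Y` on
average because `(a - U)⁺` has mean `a ^ 2 / 2`, and an allocation `t` to a contest `c ∈ S` wins it
with probability at most `1 - a + a ^ 2 * t / (2 * Y * β S c)`. So the payoff of player `X` is at
most an affine function of its total allocation, hence at most `1 - a * T₁ + a ^ 2 * T₂` in
expectation. The two cases of the bound are the minimum of this parabola over `a ∈ (0, 1]`.
-/

section Mixture

variable {κ Ω : Type*} [MeasurableSpace Ω] {A : Finset κ} {p : κ → ℝ} {μ : κ → Measure Ω}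

/-- The mixture of the measures `μ i`, `i ∈ A`, with weights `p i`. The weights are real, and
negative ones count as `0`. -/
def mixture (A : Finset κ) (p : κ → ℝ) (μ : κ → Measure Ω) : Measure Ω :=
  ∑ i ∈ A, ENNReal.ofReal (p i) • μ i

lemma mixture_apply (s : Set Ω) : mixture A p μ s = ∑ i ∈ A, ENNReal.ofReal (p i) * μ i s := by
  simp [mixture, Measure.finsetSum_apply]

lemma lintegral_mixture (f : Ω → ENNReal) :
    ∫⁻ ω, f ω ∂mixture A p μ = ∑ i ∈ A, ENNReal.ofReal (p i) * ∫⁻ ω, f ω ∂μ i := by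
  simp [mixture, lintegral_finsetSum_measure, lintegral_smul_measure]

lemma mixture_real_apply (hp : ∀ i ∈ A, 0 ≤ p i) (hμ : ∀ i ∈ A, IsFiniteMeasure (μ i))
    (s : Set Ω) : (mixture A p μ).real s = ∑ i ∈ A, p i * (μ i).real s := by
  have term_ne_top : ∀ i ∈ A, ENNReal.ofReal (p i) * μ i s ≠ ⊤ := fun i hi =>
    have := hμ i hi
    ENNReal.mul_ne_top ENNReal.ofReal_ne_top (measure_ne_top _ _)
  rw [Measure.real, mixture_apply, ENNReal.toReal_sum term_ne_top]
  refine sum_congr rfl fun i hi => ?_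
  rw [ENNReal.toReal_mul, ENNReal.toReal_ofReal (hp i hi), Measure.real]

lemma sum_ofReal_eq_one (hp : ∀ i ∈ A, 0 ≤ p i) (hsum : ∑ i ∈ A, p i = 1) :
    ∑ i ∈ A, ENNReal.ofReal (p i) = 1 := by
  rw [← ENNReal.ofReal_sum_of_nonneg hp, hsum, ENNReal.ofReal_one]

lemma mixture_apply_eq_one (hp : ∀ i ∈ A, 0 ≤ p i) (hsum : ∑ i ∈ A, p i = 1) {s : Set Ω}
    (hs : ∀ i ∈ A, μ i s = 1) : mixture A p μ s = 1 := by
  rw [mixture_apply, sum_congr rfl fun i hi => by rw [hs i hi, mul_one], sum_ofReal_eq_one hp hsum]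

lemma lintegral_mixture_le (hp : ∀ i ∈ A, 0 ≤ p i) (hsum : ∑ i ∈ A, p i = 1) {f : Ω → ENNReal}
    {b : ENNReal} (hf : ∀ i ∈ A, ∫⁻ ω, f ω ∂μ i ≤ b) : ∫⁻ ω, f ω ∂mixture A p μ ≤ b :=
  calc ∫⁻ ω, f ω ∂mixture A p μ = ∑ i ∈ A, ENNReal.ofReal (p i) * ∫⁻ ω, f ω ∂μ i :=
        lintegral_mixture f
    _ ≤ ∑ i ∈ A, ENNReal.ofReal (p i) * b := by gcongr with i hi; exact hf i hi
    _ = b := by rw [← sum_mul, sum_ofReal_eq_one hp hsum, one_mul]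

end Mixture

lemma map_apply_eq_one_of_forall_mem {Ω E : Type*} [MeasurableSpace Ω] [MeasurableSpace E]
    {μ : Measure Ω} [IsProbabilityMeasure μ] {f : Ω → E} (hf : AEMeasurable f μ) {s : Set E}
    (hs : ∀ ω, f ω ∈ s) : μ.map f s = 1 := by
  have := Measure.isProbabilityMeasure_map hf
  refine le_antisymm prob_le_one ?_
  calc (1 : ENNReal) = μ (f ⁻¹' s) := by rw [Set.preimage_eq_univ_iff.2 (Set.range_subset_iff.2 hs),
        measure_univ]
    _ ≤ μ.map f s := Measure.le_map_apply hf s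

section Strategies

variable {C K : ℕ} {B : ℝ} {F : Measure (Fin C → ℝ)}

lemma dirac_zero_mem_strat (C : ℕ) (B : ℝ) : Measure.dirac 0 ∈ Strat C B := by
  refine ⟨inferInstance, Measure.dirac_apply_of_mem fun _ => le_rfl, ?_⟩
  rw [lintegral_dirac' _ (by fun_prop)]
  simp

lemma mixture_mem_stratK {κ : Type*} {A : Finset κ} {p : κ → ℝ} {μ : κ → Measure (Fin C → ℝ)}
    (hp : ∀ i ∈ A, 0 ≤ p i) (hsum : ∑ i ∈ A, p i = 1) (hμ : ∀ i ∈ A, μ i ∈ StratK C K B) :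
    mixture A p μ ∈ StratK C K B :=
  ⟨⟨⟨mixture_apply_eq_one hp hsum fun i hi => (hμ i hi).1.1.measure_univ⟩,
    mixture_apply_eq_one hp hsum fun i hi => (hμ i hi).1.2.1,
    lintegral_mixture_le hp hsum fun i hi => (hμ i hi).1.2.2⟩,
    mixture_apply_eq_one hp hsum fun i hi => (hμ i hi).2⟩

lemma ae_nonneg_of_mem_strat (hF : F ∈ Strat C B) : ∀ᵐ x ∂F, ∀ c, 0 ≤ x c := by
  obtain ⟨_, horthant, -⟩ := hF
  have hmeas : MeasurableSet {x : Fin C → ℝ | ∀ c, 0 ≤ x c} := by measurability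
  exact (prob_compl_eq_zero_iff hmeas).2 horthant

lemma ae_sum_nonneg_of_mem_strat (hF : F ∈ Strat C B) : 0 ≤ᵐ[F] fun x => ∑ c, x c := by
  filter_upwards [ae_nonneg_of_mem_strat hF] with x hx using sum_nonneg fun c _ => hx c

lemma integrable_sum_of_mem_strat (hF : F ∈ Strat C B) : Integrable (fun x => ∑ c, x c) F := by
  refine ⟨by fun_prop, ?_⟩
  rw [hasFiniteIntegral_iff_ofReal (ae_sum_nonneg_of_mem_strat hF)]
  exact hF.2.2.trans_lt ENNReal.ofReal_lt_top

lemma integral_sum_le_of_mem_strat (hB : 0 ≤ B) (hF : F ∈ Strat C B) :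
    ∫ x, ∑ c, x c ∂F ≤ B := by
  rw [integral_eq_lintegral_of_nonneg_ae (ae_sum_nonneg_of_mem_strat hF) (by fun_prop)]
  exact ENNReal.toReal_le_of_le_ofReal hB hF.2.2

end Strategies

section Payoff

variable {C K : ℕ} {v : Fin C → ℝ} {F G : Measure (Fin C → ℝ)} {X Y : ℝ}

lemma payoff_nonneg (hv : ∀ c, 0 ≤ v c) (F G : Measure (Fin C → ℝ)) : 0 ≤ payoff C v F G :=
  integral_nonneg fun _ => integral_nonneg fun _ => sum_nonneg fun c _ => ite_nonneg (hv c) le_rfl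

lemma payoff_eq_integral_sum_measureReal (v : Fin C → ℝ) (F G : Measure (Fin C → ℝ))
    [IsFiniteMeasure G] : payoff C v F G = ∫ x, ∑ c, v c * G.real {y | y c ≤ x c} ∂F := by
  refine integral_congr_ae (.of_forall fun x => ?_)
  have hmeas : ∀ c, MeasurableSet {y : Fin C → ℝ | y c ≤ x c} := fun c =>
    measurableSet_le (measurable_pi_apply c) measurable_const
  have ite_eq_indicator : ∀ c, (fun y : Fin C → ℝ => if y c ≤ x c then v c else 0) =
      {y | y c ≤ x c}.indicator fun _ => v c := fun c => by
    ext y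
    simp [Set.indicator_apply]
  have hint : ∀ c ∈ univ, Integrable (fun y : Fin C → ℝ => if y c ≤ x c then v c else 0) G :=
    fun c _ => ite_eq_indicator c ▸ (integrable_const _).indicator (hmeas c)
  change ∫ y, ∑ c, _ ∂G = _
  rw [integral_finsetSum _ hint]
  refine sum_congr rfl fun c _ => ?_
  rw [ite_eq_indicator, integral_indicator_const _ (hmeas c), smul_eq_mul, mul_comm]

lemma payoff_le_of_mul_measureReal_le (hv : ∀ c, 0 ≤ v c) (hX : 0 ≤ X) (hF : F ∈ Strat C X)
    [IsFiniteMeasure G] {α : Fin C → ℝ} {m : ℝ} (hm : 0 ≤ m)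
    (hG : ∀ c t, 0 ≤ t → v c * G.real {y | y c ≤ t} ≤ α c + m * t) :
    payoff C v F G ≤ ∑ c, α c + m * X := by
  have := hF.1
  have hint := (integrable_sum_of_mem_strat hF).const_mul m
  calc payoff C v F G = ∫ x, ∑ c, v c * G.real {y | y c ≤ x c} ∂F :=
        payoff_eq_integral_sum_measureReal v F G
    _ ≤ ∫ x, (∑ c, α c + m * ∑ c, x c) ∂F := by
        refine integral_mono_of_nonneg (.of_forall fun x => ?_) ((integrable_const _).add hint) ?_
        · exact sum_nonneg fun c _ => mul_nonneg (hv c) measureReal_nonneg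
        · filter_upwards [ae_nonneg_of_mem_strat hF] with x hx
          rw [mul_sum, ← sum_add_distrib]
          exact sum_le_sum fun c _ => hG c (x c) (hx c)
    _ = ∑ c, α c + m * ∫ x, ∑ c, x c ∂F := by
        rw [integral_add (integrable_const _) hint, integral_const_mul, integral_const,
          probReal_univ, one_smul]
    _ ≤ ∑ c, α c + m * X := by gcongr; exact integral_sum_le_of_mem_strat hX hF

lemma iInf_iSup_payoff_le_of_mul_measureReal_le (hv : ∀ c, 0 ≤ v c) (hX : 0 ≤ X)
    (hG : G ∈ StratK C K Y) {α : Fin C → ℝ} {m : ℝ} (hm : 0 ≤ m)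
    (hcdf : ∀ c t, 0 ≤ t → v c * G.real {y | y c ≤ t} ≤ α c + m * t) :
    (⨅ G : StratK C K Y, ⨆ F : Strat C X, payoff C v F.1 G.1) ≤ ∑ c, α c + m * X := by
  have := hG.1.1
  have : Nonempty (Strat C X) := ⟨⟨_, dirac_zero_mem_strat C X⟩⟩
  have hbdd : BddBelow (Set.range fun G : StratK C K Y => ⨆ F : Strat C X, payoff C v F.1 G.1) :=
    ⟨0, Set.forall_mem_range.2 fun _ => Real.iSup_nonneg fun _ => payoff_nonneg hv _ _⟩
  exact ciInf_le_of_le hbdd ⟨G, hG⟩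
    (ciSup_le fun F => payoff_le_of_mul_measureReal_le hv hX F.2 hm hcdf)

end Payoff

section UnitInterval

open unitInterval

lemma volume_real_setOf_le_coe_le {r : ℝ} (hr : r ≤ 1) :
    volume.real {u : I | r ≤ u} ≤ 1 - r := by
  refine ENNReal.toReal_le_of_le_ofReal (sub_nonneg.2 hr) ?_
  rw [unitInterval.volume_apply, ← Real.volume_Icc]
  refine measure_mono ?_
  rintro _ ⟨u, hu, rfl⟩
  exact ⟨hu, u.2.2⟩

lemma integral_posPart_sub {a : ℝ} (ha : 0 ≤ a) (ha1 : a ≤ 1) :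
    ∫ u : I, (a - u)⁺ = a ^ 2 / 2 := by
  have left_of_zero : ∫ u in (a - 1)..0, u⁺ = 0 :=
    intervalIntegral.integral_zero_ae (.of_forall fun u hu => by
      rw [Set.uIoc_of_le (by linarith)] at hu
      exact posPart_of_nonpos hu.2)
  have right_of_zero : ∫ u in 0..a, u⁺ = a ^ 2 / 2 := by
    rw [intervalIntegral.integral_congr (g := id) fun u hu => ?_]
    · simp
    · rw [Set.uIcc_of_le ha] at hu
      exact posPart_of_nonneg hu.1
  have hint : ∀ b c : ℝ, IntervalIntegrable (fun u : ℝ => u⁺) volume b c := fun b c =>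
    continuous_posPart.intervalIntegrable b c
  calc ∫ u : I, (a - u)⁺ = ∫ u in (0 : ℝ)..1, (a - u)⁺ := by
        rw [integral_subtype measurableSet_Icc fun u : ℝ => (a - u)⁺, integral_Icc_eq_integral_Ioc,
          intervalIntegral.integral_of_le zero_le_one]
    _ = ∫ u in (a - 1)..a, u⁺ := by
        rw [intervalIntegral.integral_comp_sub_left (fun u : ℝ => u⁺), sub_zero]
    _ = a ^ 2 / 2 := by
        rw [← intervalIntegral.integral_add_adjacent_intervals (hint _ 0) (hint 0 _),
          left_of_zero, right_of_zero, zero_add]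

end UnitInterval

section Bid

open unitInterval

variable {ι : Type*} {Y a : ℝ} {S : Finset ι} {b : ι → ℝ}

/-- The allocation that player `Y` makes on the set `S` of contests, with shares `b`, when the
uniform random variable of the strategy takes the value `u`. It vanishes for `u ≥ a`, so `a` is the
probability of competing at all. -/
def bid (Y a : ℝ) (S : Finset ι) (b : ι → ℝ) (u : I) : ι → ℝ :=
  (S : Set ι).indicator fun c => 2 * Y / a ^ 2 * b c * (a - u)⁺

/-- The distribution of `bid Y a S b u` for `u` uniform on the unit interval. -/
def bidLaw (Y a : ℝ) (S : Finset ι) (b : ι → ℝ) : Measure (ι → ℝ) :=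
  volume.map (bid Y a S b)

lemma bid_nonneg (hY : 0 ≤ Y) (hb : ∀ c ∈ S, 0 ≤ b c) (u : I) (c : ι) : 0 ≤ bid Y a S b u c := by
  refine Set.indicator_nonneg (fun c hc => ?_) c
  have := hb c hc
  positivity

lemma sum_bid [Fintype ι] (hbsum : ∑ c ∈ S, b c = 1) (u : I) :
    ∑ c, bid Y a S b u c = 2 * Y / a ^ 2 * (a - u)⁺ := by
  simp only [bid]
  rw [sum_indicator_subset _ (subset_univ S), ← sum_mul, ← mul_sum, hbsum, mul_one]

lemma measurable_bid : Measurable (bid Y a S b) := by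
  refine measurable_pi_iff.2 fun c => ?_
  by_cases hc : c ∈ S <;>
    simp only [bid, Set.indicator, mem_coe, hc, if_true, if_false] <;> fun_prop

instance isProbabilityMeasure_bidLaw : IsProbabilityMeasure (bidLaw Y a S b) :=
  Measure.isProbabilityMeasure_map measurable_bid.aemeasurable

lemma lintegral_sum_bidLaw [Fintype ι] (hY : 0 ≤ Y) (ha : 0 < a) (ha1 : a ≤ 1)
    (hbsum : ∑ c ∈ S, b c = 1) :
    ∫⁻ y, ENNReal.ofReal (∑ c, y c) ∂bidLaw Y a S b = ENNReal.ofReal Y := by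
  rw [bidLaw, lintegral_map (by fun_prop) measurable_bid]
  simp only [sum_bid hbsum]
  rw [← ofReal_integral_eq_lintegral_ofReal
      (Continuous.integrable_of_hasCompactSupport (by fun_prop) (.of_compactSpace _))
      (.of_forall fun u => by positivity),
    integral_const_mul, integral_posPart_sub ha.le ha1]
  congr 1
  field_simp

lemma bid_mem_RK {C K : ℕ} {S : Finset (Fin C)} {b : Fin C → ℝ} (hY : 0 ≤ Y)
    (hb : ∀ c ∈ S, 0 ≤ b c) (hS : #S ≤ K) (u : I) : bid Y a S b u ∈ RK C K := by
  refine ⟨bid_nonneg hY hb u, ?_⟩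
  have positive_subset : {c | 0 < bid Y a S b u c} ⊆ S := fun c (hc : 0 < bid Y a S b u c) =>
    by_contra fun hcS => hc.ne' (Set.indicator_of_notMem hcS _)
  calc {c | 0 < bid Y a S b u c}.ncard ≤ (S : Set (Fin C)).ncard :=
        Set.ncard_le_ncard positive_subset S.finite_toSet
    _ = #S := Set.ncard_coe_finset S
    _ ≤ K := hS

lemma bidLaw_mem_stratK {C K : ℕ} {S : Finset (Fin C)} {b : Fin C → ℝ} (hY : 0 ≤ Y) (ha : 0 < a)
    (ha1 : a ≤ 1) (hb : ∀ c ∈ S, 0 ≤ b c) (hbsum : ∑ c ∈ S, b c = 1) (hS : #S ≤ K) :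
    bidLaw Y a S b ∈ StratK C K Y :=
  ⟨⟨inferInstance,
    map_apply_eq_one_of_forall_mem measurable_bid.aemeasurable (bid_nonneg hY hb),
    (lintegral_sum_bidLaw hY ha ha1 hbsum).le⟩,
    map_apply_eq_one_of_forall_mem measurable_bid.aemeasurable (bid_mem_RK hY hb hS)⟩

lemma bidLaw_real_setOf_le_le (hY : 0 < Y) (ha : 0 < a) (ha1 : a ≤ 1) {c : ι} (hc : c ∈ S)
    (hb : 0 < b c) {t : ℝ} (ht : 0 ≤ t) :
    (bidLaw Y a S b).real {y | y c ≤ t} ≤ 1 - a + a ^ 2 / (2 * Y) * t / b c := by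
  set s := a ^ 2 / (2 * Y) * t / b c
  have hs : 0 ≤ s := by positivity
  have hsub : bid Y a S b ⁻¹' {y | y c ≤ t} ⊆ {u : I | a - s ≤ u} := by
    intro u (hu : bid Y a S b u c ≤ t)
    rw [bid, Set.indicator_of_mem (mem_coe.2 hc)] at hu
    have hpos : (a - u)⁺ ≤ s := by
      rw [le_div_iff₀ hb, div_mul_eq_mul_div, le_div_iff₀ (by positivity)]
      calc (a - u)⁺ * b c * (2 * Y) = a ^ 2 * (2 * Y / a ^ 2 * b c * (a - u)⁺) := by field_simp
        _ ≤ a ^ 2 * t := by gcongr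
    exact sub_le_comm.1 ((le_posPart _).trans hpos)
  calc (bidLaw Y a S b).real {y | y c ≤ t} = volume.real (bid Y a S b ⁻¹' {y | y c ≤ t}) :=
        map_measureReal_apply measurable_bid (measurableSet_le (by fun_prop) (by fun_prop))
    _ ≤ volume.real {u : I | a - s ≤ u} := measureReal_mono hsub
    _ ≤ 1 - (a - s) := volume_real_setOf_le_coe_le (by linarith)
    _ = 1 - a + s := by ring

end Bid

section Lottery

variable {ι : Type*} [Fintype ι] [DecidableEq ι] {K : ℕ} {Y a : ℝ} {p : Finset ι → ℝ}
  {β : Finset ι → ι → ℝ}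

/-- The probability that the random `K`-subset drawn from `p` contains `c`, i.e. the inner sum of
`T₁(p)`. -/
def inclusionProb (K : ℕ) (p : Finset ι → ℝ) (c : ι) : ℝ :=
  ∑ S with #S = K ∧ c ∈ S, p S

/-- The expectation of `1{c ∈ S} / β_{S,c}` for the random `K`-subset `S` drawn from `p`, i.e. the
inner sum of `T₂(p, β)`. -/
def expectedInverseShare (K : ℕ) (p : Finset ι → ℝ) (β : Finset ι → ι → ℝ) (c : ι) : ℝ :=
  ∑ S with #S = K ∧ c ∈ S, p S / β S c

/-- The strategy of player `Y` that draws a `K`-subset `S` from `p` and plays `bid` on `S` with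
shares `β S`. -/
def lottery (K : ℕ) (Y a : ℝ) (p : Finset ι → ℝ) (β : Finset ι → ι → ℝ) : Measure (ι → ℝ) :=
  mixture {S | #S = K} p fun S => bidLaw Y a S (β S)

lemma expectedInverseShare_nonneg (hp : ∀ S, 0 ≤ p S)
    (hβ : ∀ S : Finset ι, #S = K → ∀ c ∈ S, 0 < β S c) (c : ι) :
    0 ≤ expectedInverseShare K p β c := by
  refine sum_nonneg fun S hS => ?_
  obtain ⟨hcard, hc⟩ := (mem_filter.1 hS).2
  exact div_nonneg (hp S) (hβ S hcard c hc).le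

lemma sum_mul_inclusionProb_pos {v : ι → ℝ} (hv : ∀ c, 0 < v c) (hK : K ≠ 0) (hp : ∀ S, 0 ≤ p S)
    (hpsum : ∑ S with #S = K, p S ≠ 0) : 0 < ∑ c, v c * inclusionProb K p c := by
  obtain ⟨S, hS, hpS⟩ := exists_ne_zero_of_sum_ne_zero hpsum
  have hcard : #S = K := (mem_filter.1 hS).2
  obtain ⟨c, hc⟩ := card_ne_zero.1 (hcard ▸ hK)
  have hc_pos : 0 < inclusionProb K p c :=
    sum_pos' (fun S _ => hp S) ⟨S, by simp [hcard, hc], (hp S).lt_of_ne' hpS⟩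
  exact sum_pos' (fun c _ => mul_nonneg (hv c).le (sum_nonneg fun S _ => hp S))
    ⟨c, mem_univ c, mul_pos (hv c) hc_pos⟩

lemma lottery_real_setOf_le_le (hY : 0 < Y) (ha : 0 < a) (ha1 : a ≤ 1) (hp : ∀ S, 0 ≤ p S)
    (hpsum : ∑ S with #S = K, p S = 1) (hβ : ∀ S : Finset ι, #S = K → ∀ c ∈ S, 0 < β S c) (c : ι)
    {t : ℝ} (ht : 0 ≤ t) :
    (lottery K Y a p β).real {y | y c ≤ t} ≤
      1 - a * inclusionProb K p c + a ^ 2 / (2 * Y) * t * expectedInverseShare K p β c := by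
  have bid_le : ∀ S ∈ ({S | #S = K} : Finset (Finset ι)),
      p S * (bidLaw Y a S (β S)).real {y | y c ≤ t} ≤
        p S + if c ∈ S then -a * p S + a ^ 2 / (2 * Y) * t * (p S / β S c) else 0 := by
    intro S hS
    split_ifs with hc
    · have hβc := hβ S (mem_filter.1 hS).2 c hc
      calc _ ≤ p S * (1 - a + a ^ 2 / (2 * Y) * t / β S c) :=
            mul_le_mul_of_nonneg_left (bidLaw_real_setOf_le_le hY ha ha1 hc hβc ht) (hp S)
        _ = _ := by ring
    · simpa using mul_le_of_le_one_right (hp S) measureReal_le_one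
  calc (lottery K Y a p β).real {y | y c ≤ t}
      = ∑ S with #S = K, p S * (bidLaw Y a S (β S)).real {y | y c ≤ t} :=
        mixture_real_apply (fun S _ => hp S) (fun _ _ => inferInstance) _
    _ ≤ _ := sum_le_sum bid_le
    _ = _ := by
        rw [sum_add_distrib, hpsum, ← sum_filter, filter_filter, sum_add_distrib, ← mul_sum,
          ← mul_sum, inclusionProb, expectedInverseShare]
        ring

end Lottery

lemma iInf_iSup_payoff_le_parabola {C K : ℕ} {v : Fin C → ℝ} {X Y a : ℝ}
    {p : Finset (Fin C) → ℝ} {β : Finset (Fin C) → Fin C → ℝ} (hv : ∀ c, 0 ≤ v c) (hX : 0 ≤ X)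
    (hY : 0 < Y) (ha : 0 < a) (ha1 : a ≤ 1) (hp : ∀ S, 0 ≤ p S)
    (hpsum : ∑ S with #S = K, p S = 1)
    (hβ : ∀ S : Finset (Fin C), #S = K → ∀ c ∈ S, 0 < β S c)
    (hβsum : ∀ S : Finset (Fin C), #S = K → ∑ c ∈ S, β S c = 1) :
    (⨅ G : StratK C K Y, ⨆ F : Strat C X, payoff C v F.1 G.1) ≤
      ∑ c, v c - a * ∑ c, v c * inclusionProb K p c +
        a ^ 2 * (X / (2 * Y) * ⨆ c, v c * expectedInverseShare K p β c) := by
  set Q := ⨆ c, v c * expectedInverseShare K p β c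
  have hQ : 0 ≤ Q :=
    Real.iSup_nonneg fun c => mul_nonneg (hv c) (expectedInverseShare_nonneg hp hβ c)
  have le_Q : ∀ c, v c * expectedInverseShare K p β c ≤ Q :=
    le_ciSup (Set.finite_range _).bddAbove
  have lottery_mem : lottery K Y a p β ∈ StratK C K Y :=
    mixture_mem_stratK (fun S _ => hp S) hpsum fun S hS =>
      have hcard := (mem_filter.1 hS).2
      bidLaw_mem_stratK hY.le ha ha1 (fun c hc => (hβ S hcard c hc).le) (hβsum S hcard) hcard.le
  have cdf_le : ∀ c t, 0 ≤ t → v c * (lottery K Y a p β).real {y | y c ≤ t} ≤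
      (v c - a * (v c * inclusionProb K p c)) + a ^ 2 / (2 * Y) * Q * t := fun c t ht =>
    calc v c * (lottery K Y a p β).real {y | y c ≤ t}
        ≤ v c * (1 - a * inclusionProb K p c +
            a ^ 2 / (2 * Y) * t * expectedInverseShare K p β c) :=
          mul_le_mul_of_nonneg_left (lottery_real_setOf_le_le hY ha ha1 hp hpsum hβ c ht) (hv c)
      _ = (v c - a * (v c * inclusionProb K p c)) +
            a ^ 2 / (2 * Y) * (v c * expectedInverseShare K p β c) * t := by ring
      _ ≤ _ := by gcongr; exact le_Q c
  refine (iInf_iSup_payoff_le_of_mul_measureReal_le hv hX lottery_mem (by positivity)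
    cdf_le).trans_eq ?_
  rw [sum_sub_distrib, ← mul_sum]
  ring

lemma exists_parabola_eq_ite {T₁ T₂ : ℝ} (hT₁ : 0 < T₁) :
    ∃ a, 0 < a ∧ a ≤ 1 ∧ 1 - a * T₁ + a ^ 2 * T₂ =
      if T₁ ≤ 2 * T₂ then 1 - T₁ ^ 2 / (4 * T₂) else 1 - T₁ + T₂ := by
  split_ifs with h
  · have hT₂ : 0 < T₂ := by linarith
    refine ⟨T₁ / (2 * T₂), by positivity, (div_le_one (by positivity)).2 h, ?_⟩
    field_simp
    ring
  · exact ⟨1, one_pos, le_rfl, by ring⟩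

/-- in the generalized restricted game `RL^K(X,Y;v)`, for any probability
distribution `p` over the size-`K` subsets and any positive conditional weights `β`, the
min-max value of player X is at most the piecewise bound built from
`T₁(p) = Σ_c v_c Σ_{S ∋ c} p_S` and `T₂(p,β) = (X/(2Y))·max_c v_c Σ_{S ∋ c} p_S/β_{S,c}`. -/
theorem RLK_minmax_upper_bound (C : ℕ) (hC : 0 < C) (v : Fin C → ℝ)
    (hpos : ∀ c, 0 < v c) (hsum : ∑ c, v c = 1)
    (X Y : ℝ) (hX : 0 < X) (hY : 0 < Y) (K : ℕ) (hK1 : 1 ≤ K) (hK2 : K ≤ C)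
    (p : Finset (Fin C) → ℝ)
    (hp0 : ∀ S, 0 ≤ p S) (hpK : ∀ S, S.card ≠ K → p S = 0)
    (hpsum : ∑ S ∈ Finset.univ.filter (fun S : Finset (Fin C) => S.card = K), p S = 1)
    (β : Finset (Fin C) → Fin C → ℝ)
    (hβpos : ∀ S : Finset (Fin C), S.card = K → ∀ c ∈ S, 0 < β S c)
    (hβsum : ∀ S : Finset (Fin C), S.card = K → ∑ c ∈ S, β S c = 1) :
    (⨅ G : StratK C K Y, ⨆ F : Strat C X, payoff C v F.1 G.1) ≤
      (let T₁ : ℝ := ∑ c, v c *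
        ∑ S ∈ Finset.univ.filter (fun S : Finset (Fin C) => S.card = K ∧ c ∈ S), p S;
      let T₂ : ℝ := X / (2 * Y) * ⨆ c : Fin C, v c *
        ∑ S ∈ Finset.univ.filter (fun S : Finset (Fin C) => S.card = K ∧ c ∈ S), p S / β S c;
      if T₁ ≤ 2 * T₂ then 1 - T₁ ^ 2 / (4 * T₂) else 1 - T₁ + T₂) := by
  extract_lets T₁ T₂
  have hT₁ : 0 < T₁ :=
    sum_mul_inclusionProb_pos hpos (Nat.one_le_iff_ne_zero.1 hK1) hp0 (hpsum ▸ one_ne_zero)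
  obtain ⟨a, ha, ha1, parabola_eq⟩ := exists_parabola_eq_ite (T₂ := T₂) hT₁
  rw [← parabola_eq, ← hsum]
  exact iInf_iSup_payoff_le_parabola (fun c => (hpos c).le) hX.le hY ha ha1 hp0 hpsum hβpos hβsum
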